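/- Let f(x) = x². In the root q-Jaco graph J_∞(x²), the out-degrees of consecutive vertices are never equal: d⁺(v_i) ≠ d⁺(v_{i+1}) for every i ∈ ℕ, where d⁺(v_i) = f(i) − d⁻(v_i) = i² − d⁻(v_i). -/

import Mathlib

/-- In-degree of vertex `v_j` in the (root) Jaco graph with incidence function `f`:
`d⁻(v_j) = |{ i : 1 ≤ i < j, i + f i − d⁻(v_i) ≥ j }|`. -/
noncomputable def jacoIn (f : ℕ → ℕ) (j : ℕ) : ℕ :=
  Nat.strongRecOn j (fun j ih =>
    (((Finset.Ico 1 j).attach).filter (fun i : {x // x ∈ Finset.Ico 1 j} =>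
      j ≤ i.1 + f i.1 - ih i.1 (Finset.mem_Ico.mp i.2).2)).card)

/-- The arc `(v_i, v_j)` is present in the Jaco graph iff `1 ≤ i < j` and
`i + f i − d⁻(v_i) ≥ j`. -/
def jacoArc (f : ℕ → ℕ) (i j : ℕ) : Prop :=
  1 ≤ i ∧ i < j ∧ j ≤ i + f i - jacoIn f i

noncomputable instance (f : ℕ → ℕ) (i j : ℕ) : Decidable (jacoArc f i j) := by
  unfold jacoArc; infer_instance

/-- The underlying undirected simple graph `J*_n(f)` of the finite Jaco graph `J_n(f)`,
on vertex set `{v_1, …, v_n}` (vertex `x : Fin n` represents `v_{x+1}`). -/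
def jacoGraph (f : ℕ → ℕ) (n : ℕ) : SimpleGraph (Fin n) :=
  SimpleGraph.fromRel (fun x y => jacoArc f (x.1 + 1) (y.1 + 1))

noncomputable instance (f : ℕ → ℕ) (n : ℕ) : DecidableRel (jacoGraph f n).Adj := fun x y =>
  decidable_of_iff
    (x ≠ y ∧ (jacoArc f (x.1 + 1) (y.1 + 1) ∨ jacoArc f (y.1 + 1) (x.1 + 1)))
    (by unfold jacoGraph; exact (SimpleGraph.fromRel_adj (fun a b : Fin n => jacoArc f (a.1 + 1) (b.1 + 1)) x y).symm)

/-!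
The set of vertices reached from `v_i` is an interval starting at `v_{i+1}`, so every in-neighbour
of `v_{j+1}` other than `v_j` is already an in-neighbour of `v_j`. Hence passing from `v_i` to
`v_{i+1}` raises the in-degree by at most one, whereas `x ^ 2` grows by `2 * i + 1 > 1`, and the
out-degree strictly increases.
-/

/-- The in-neighbourhood of `v_j` in the root Jaco graph, as the finite set of the indices `i` of
the vertices `v_i` with an arc to `v_j`. It turns the recursion for `jacoIn` into a cardinality. -/
noncomputable def jacoInNeighbors (f : ℕ → ℕ) (j : ℕ) : Finset ℕ :=
  {i ∈ Finset.Ico 1 j | jacoArc f i j}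

theorem mem_jacoInNeighbors {f : ℕ → ℕ} {i j : ℕ} : i ∈ jacoInNeighbors f j ↔ jacoArc f i j := by
  simp only [jacoInNeighbors, Finset.mem_filter, Finset.mem_Ico, and_iff_right_iff_imp]
  exact fun h ↦ ⟨h.1, h.2.1⟩

theorem jacoArc.of_le {f : ℕ → ℕ} {i j k : ℕ} (h : jacoArc f i k) (hij : i < j) (hjk : j ≤ k) :
    jacoArc f i j :=
  ⟨h.1, hij, hjk.trans h.2.2⟩

theorem jacoInNeighbors_succ_subset (f : ℕ → ℕ) (j : ℕ) :
    jacoInNeighbors f (j + 1) ⊆ insert j (jacoInNeighbors f j) := by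
  intro i hi
  have harc : jacoArc f i (j + 1) := mem_jacoInNeighbors.mp hi
  obtain rfl | hij := (Nat.le_of_lt_succ harc.2.1).eq_or_lt
  · exact Finset.mem_insert_self _ _
  · exact Finset.mem_insert_of_mem <|
      mem_jacoInNeighbors.mpr (harc.of_le hij j.le_succ)

theorem jacoIn_eq_card_jacoInNeighbors (f : ℕ → ℕ) (j : ℕ) :
    jacoIn f j = (jacoInNeighbors f j).card := by
  have hrec : jacoIn f j = ((Finset.Ico 1 j).attach.filter
      fun i ↦ j ≤ i.1 + f i.1 - jacoIn f i.1).card := by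
    conv_lhs => unfold jacoIn
    rw [Nat.strongRecOn_eq]
    rfl
  have harc : jacoInNeighbors f j = {i ∈ Finset.Ico 1 j | j ≤ i + f i - jacoIn f i} :=
    Finset.filter_congr fun i hi ↦ by
      obtain ⟨hi₁, hij⟩ := Finset.mem_Ico.mp hi
      simp only [jacoArc, hi₁, hij, true_and]
  rw [hrec, harc, Finset.filter_attach fun i ↦ j ≤ i + f i - jacoIn f i, Finset.card_map,
    Finset.card_attach]

theorem jacoIn_le_sub_one (f : ℕ → ℕ) (j : ℕ) : jacoIn f j ≤ j - 1 :=
  calc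
    jacoIn f j = (jacoInNeighbors f j).card := jacoIn_eq_card_jacoInNeighbors f j
    _ ≤ (Finset.Ico 1 j).card := Finset.card_filter_le _ _
    _ = j - 1 := Nat.card_Ico 1 j

theorem jacoIn_succ_le (f : ℕ → ℕ) (j : ℕ) : jacoIn f (j + 1) ≤ jacoIn f j + 1 := by
  simp only [jacoIn_eq_card_jacoInNeighbors]
  exact (Finset.card_le_card (jacoInNeighbors_succ_subset f j)).trans (Finset.card_insert_le _ _)

theorem qJaco_sq_outdegrees_distinct_general (f : ℕ → ℕ) (i : ℕ) (hd : jacoIn f i ≤ f i)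
    (hf : f i + 1 < f (i + 1)) : f i - jacoIn f i < f (i + 1) - jacoIn f (i + 1) := by
  have hsucc : jacoIn f (i + 1) ≤ jacoIn f i + 1 := jacoIn_succ_le f i
  omega

/-- For `f(x) = x²`, in the root q-Jaco graph `J_∞(x²)` the
out-degrees `d⁺(v_i) = i² − d⁻(v_i)` of consecutive vertices are never equal. -/
theorem qJaco_sq_outdegrees_distinct (i : ℕ) (hi : 1 ≤ i) :
    i ^ 2 - jacoIn (fun x => x ^ 2) i ≠
      (i + 1) ^ 2 - jacoIn (fun x => x ^ 2) (i + 1) := by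
  have hd : jacoIn (fun x => x ^ 2) i ≤ i ^ 2 :=
    (jacoIn_le_sub_one _ i).trans <| (i.sub_le 1).trans (Nat.le_self_pow two_ne_zero i)
  have hf : i ^ 2 + 1 < (i + 1) ^ 2 := by linarith [add_sq i 1]
  exact (qJaco_sq_outdegrees_distinct_general _ i hd hf).ne
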